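/- For every a > 0, as x → 0⁺ one has the asymptotic expansion S_a(x) = −π/2 + a·(1 − γ)·x − a·x·ln(a·x) + O(x²); that is, the function x ↦ S_a(x) + π/2 − a(1 − γ)x + a·x·ln(a·x) is O(x²) as x → 0⁺. -/

import Mathlib

open Filter MeasureTheory Topology

/-- The sine integral `si(x) = -∫_x^∞ sin t / t dt`, defined via the improper
(limit of interval integrals) form. -/
noncomputable def si (x : ℝ) : ℝ :=
  - limUnder Filter.atTop (fun R : ℝ => ∫ t in x..R, Real.sin t / t)

/-- The cosine integral `ci(x) = -∫_x^∞ cos t / t dt`, defined via the improper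
(limit of interval integrals) form. -/
noncomputable def ci (x : ℝ) : ℝ :=
  - limUnder Filter.atTop (fun R : ℝ => ∫ t in x..R, Real.cos t / t)

/-- The kernel `S_a(x) = sign(x) (si(a|x|) cos(a|x|) - ci(a|x|) sin(a|x|))`, with `S_a(0)=0`. -/
noncomputable def Sker (a x : ℝ) : ℝ :=
  Real.sign x * (si (a * |x|) * Real.cos (a * |x|) - ci (a * |x|) * Real.sin (a * |x|))

/-- The kernel `T_a(x) = si(a|x|) sin(a|x|) + ci(a|x|) cos(a|x|)`. -/
noncomputable def Tker (a x : ℝ) : ℝ :=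
  si (a * |x|) * Real.sin (a * |x|) + ci (a * |x|) * Real.cos (a * |x|)

/-!
Let `f(y) = ∫_0^∞ e^{-yt} / (1 + t²) dt`, and let `g` be the Laplace transform of `t / (1 + t²)`.
Since `f' = -g` and `g' = f - 1 / y`, rotating `(f, g)` by the angle `y` gives `(si, ci)` up to
signs, and therefore `S_a(x) = -f(a x)`.

The primitive `log √(1 + t²)` of `t / (1 + t²)` exceeds `log t` by a function `k` that is
nonnegative on `(0, ∞)` with integral `π / 2`, and the Laplace transform of `log` is
`-(γ + log y) / y`, so integration by parts gives the exact identity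
`g(y) = -(γ + log y) + y L[k](y)`. Hence `R(y) = f(y) + (1 - γ) y - y log y` satisfies
`R(0) = π / 2` and `R'(y) = -y L[k](y)`, and the mean value theorem yields
`|R(y) - π / 2| ≤ (π / 2) y²`.
-/

section LaplaceTransform

open Set Real

variable {E : Type*} [NormedAddCommGroup E] [NormedSpace ℝ E] {h k : ℝ → E} {a c y : ℝ}

/-- The one-sided Laplace transform `∫_0^∞ e^{-yt} h(t) dt`, with the junk value `0` when the
integrand is not Bochner integrable. -/
noncomputable def laplaceTransform (h : ℝ → E) (y : ℝ) : E :=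
  ∫ t in Ioi 0, exp (-y * t) • h t

/-- Absolute convergence of the Laplace integral of `h` at `y`, which excludes the junk value of
`laplaceTransform`. -/
def LaplaceConvergent (h : ℝ → E) (y : ℝ) : Prop :=
  IntegrableOn (fun t => exp (-y * t) • h t) (Ioi 0)

lemma norm_exp_neg_mul_smul_le {t : ℝ} (ht : 0 ≤ t) (hcy : c ≤ y) (v : E) :
    ‖exp (-y * t) • v‖ ≤ ‖exp (-c * t) • v‖ := by
  rw [norm_smul, norm_smul, norm_eq_abs, norm_eq_abs, abs_exp, abs_exp]
  gcongr

namespace LaplaceConvergent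

lemma aestronglyMeasurable (hh : LaplaceConvergent h c) :
    AEStronglyMeasurable h (volume.restrict (Ioi 0)) := by
  have hexp : Continuous fun t : ℝ => exp (c * t) := by fun_prop
  refine (hexp.aestronglyMeasurable.smul (Integrable.aestronglyMeasurable hh)).congr
    (ae_of_all _ fun t => ?_)
  simp [smul_smul, ← exp_add]

lemma aestronglyMeasurable_exp_smul (hh : LaplaceConvergent h c) (y : ℝ) :
    AEStronglyMeasurable (fun t => exp (-y * t) • h t) (volume.restrict (Ioi 0)) :=
  (by fun_prop : Continuous fun t => exp (-y * t)).aestronglyMeasurable.smul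
    hh.aestronglyMeasurable

lemma mono (hh : LaplaceConvergent h c) (hcy : c ≤ y) : LaplaceConvergent h y :=
  Integrable.mono hh (hh.aestronglyMeasurable_exp_smul y) <|
    ae_restrict_of_forall_mem measurableSet_Ioi fun _ ht => norm_exp_neg_mul_smul_le ht.le hcy _

lemma add (hh : LaplaceConvergent h y) (hk : LaplaceConvergent k y) :
    LaplaceConvergent (fun t => h t + k t) y :=
  (Integrable.add hh hk).congr (ae_of_all _ fun _ => (smul_add _ _ _).symm)

lemma comp_mul_left (hh : LaplaceConvergent h (y / a)) (ha : 0 < a) :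
    LaplaceConvergent (fun t => h (a * t)) y := by
  have := (integrableOn_Ioi_comp_mul_left_iff (fun s => exp (-(y / a) * s) • h s) 0 ha).2
    (by rwa [mul_zero])
  refine this.congr_fun (fun t _ => ?_) measurableSet_Ioi
  simp only
  field_simp

lemma id_smul (hh : LaplaceConvergent h c) (hcy : c < y) :
    LaplaceConvergent (fun t => t • h t) y := by
  have hδ : 0 < y - c := sub_pos.2 hcy
  have hbound : ∀ t ∈ Ioi (0 : ℝ), ‖t * exp (-(y - c) * t)‖ ≤ (y - c)⁻¹ := fun t ht => by
    rw [norm_of_nonneg (mul_nonneg (mem_Ioi.1 ht).le (exp_pos _).le), neg_mul, exp_neg,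
      ← div_eq_mul_inv, div_le_iff₀ (exp_pos _), le_inv_mul_iff₀ hδ]
    linarith [add_one_le_exp ((y - c) * t)]
  have hcont : Continuous fun t => t * exp (-(y - c) * t) := by fun_prop
  refine (Integrable.bdd_smul hh _ hcont.aestronglyMeasurable
    (ae_restrict_of_forall_mem measurableSet_Ioi hbound)).congr (ae_of_all _ fun t => ?_)
  simp only [Pi.smul_apply', smul_smul]
  rw [mul_assoc, ← exp_add, mul_comm t]
  ring_nf

end LaplaceConvergent

lemma laplaceTransform_sub (hh : LaplaceConvergent h y) (hk : LaplaceConvergent k y) :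
    laplaceTransform (fun t => h t - k t) y = laplaceTransform h y - laplaceTransform k y := by
  simp only [laplaceTransform, smul_sub]
  exact integral_sub hh hk

lemma laplaceTransform_comp_mul_left (h : ℝ → E) (y : ℝ) (ha : 0 < a) :
    laplaceTransform (fun t => h (a * t)) y = a⁻¹ • laplaceTransform h (y / a) := by
  have := integral_comp_mul_left_Ioi (fun s => exp (-(y / a) * s) • h s) 0 ha
  rw [mul_zero] at this
  rw [laplaceTransform, laplaceTransform, ← this]
  congr 1 with t
  field_simp

lemma laplaceConvergent_const (v : E) (hy : 0 < y) : LaplaceConvergent (fun _ => v) y :=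
  (exp_neg_integrableOn_Ioi 0 hy).smul_const v

lemma laplaceTransform_const [CompleteSpace E] (v : E) (hy : 0 < y) :
    laplaceTransform (fun _ => v) y = y⁻¹ • v := by
  rw [laplaceTransform, integral_smul_const, integral_exp_mul_Ioi (neg_neg_of_pos hy)]
  simp

lemma norm_laplaceTransform_le (hh : LaplaceConvergent h c) (hcy : c ≤ y) :
    ‖laplaceTransform h y‖ ≤ ∫ t in Ioi 0, ‖exp (-c * t) • h t‖ :=
  norm_integral_le_of_norm_le hh.norm <|
    ae_restrict_of_forall_mem measurableSet_Ioi fun _ ht => norm_exp_neg_mul_smul_le ht.le hcy _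

lemma tendsto_laplaceTransform_atTop (hh : LaplaceConvergent h c) :
    Tendsto (laplaceTransform h) atTop (𝓝 0) := by
  rw [← integral_zero ℝ E (μ := volume.restrict (Ioi 0))]
  refine tendsto_integral_filter_of_dominated_convergence (fun t => ‖exp (-c * t) • h t‖)
    (Eventually.of_forall hh.aestronglyMeasurable_exp_smul) ?_ hh.norm ?_
  · filter_upwards [eventually_ge_atTop c] with y hcy
    exact ae_restrict_of_forall_mem measurableSet_Ioi fun t ht =>
      norm_exp_neg_mul_smul_le ht.le hcy _
  · refine ae_restrict_of_forall_mem measurableSet_Ioi fun t ht => ?_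
    have hexp : Tendsto (fun y => exp (-y * t)) atTop (𝓝 0) :=
      tendsto_exp_atBot.comp (tendsto_neg_atTop_atBot.atBot_mul_const ht)
    simpa using hexp.smul_const (h t)

lemma continuousWithinAt_laplaceTransform (hh : LaplaceConvergent h c) :
    ContinuousWithinAt (laplaceTransform h) (Ici c) c := by
  refine continuousWithinAt_of_dominated (bound := fun t => ‖exp (-c * t) • h t‖)
    (Eventually.of_forall hh.aestronglyMeasurable_exp_smul) ?_ hh.norm (ae_of_all _ fun t => ?_)
  · filter_upwards [self_mem_nhdsWithin] with y hcy
    exact ae_restrict_of_forall_mem measurableSet_Ioi fun t ht =>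
      norm_exp_neg_mul_smul_le ht.le hcy _
  · exact Continuous.continuousWithinAt (by fun_prop)

lemma hasDerivAt_laplaceTransform (hh : LaplaceConvergent h c) (hcy : c < y) :
    HasDerivAt (laplaceTransform h) (-laplaceTransform (fun t => t • h t) y) y := by
  obtain ⟨m, hcm, hmy⟩ := exists_between hcy
  have hth : LaplaceConvergent (fun t => t • h t) m := hh.id_smul hcm
  rw [laplaceTransform, ← integral_neg]
  refine (hasDerivAt_integral_of_dominated_loc_of_deriv_le (Ioi_mem_nhds hmy)
    (Eventually.of_forall hh.aestronglyMeasurable_exp_smul) (hh.mono hcy.le)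
    (F' := fun x t => -(exp (-x * t) • t • h t)) (hth.aestronglyMeasurable_exp_smul y).neg
    ?_ hth.norm (ae_of_all _ fun t x _ => ?_)).2
  · refine ae_restrict_of_forall_mem measurableSet_Ioi fun t ht x hx => ?_
    rw [norm_neg]
    exact norm_exp_neg_mul_smul_le ht.le hx.le _
  · have hexp : HasDerivAt (fun x => exp (-x * t)) (exp (-x * t) * (-1 * t)) x :=
      ((hasDerivAt_neg x).mul_const t).exp
    refine (hexp.smul_const (h t)).congr_deriv ?_
    simp [smul_smul]

lemma laplaceTransform_deriv [CompleteSpace E] {h' : ℝ → E}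
    (hcont : ContinuousWithinAt h (Ici 0) 0) (hderiv : ∀ t ∈ Ioi 0, HasDerivAt h (h' t) t)
    (hh : LaplaceConvergent h y) (hh' : LaplaceConvergent h' y) :
    laplaceTransform h' y = y • laplaceTransform h y - h 0 := by
  have hexp : Continuous fun t => exp (-y * t) := by fun_prop
  have hprod : ∀ t ∈ Ioi 0, HasDerivAt (fun t => exp (-y * t) • h t)
      (exp (-y * t) • h' t - y • exp (-y * t) • h t) t := fun t ht => by
    refine (((hasDerivAt_const_mul (-y)).exp).smul (hderiv t ht)).congr_deriv ?_
    module
  have hyh : IntegrableOn (fun t => y • exp (-y * t) • h t) (Ioi 0) := hh.smul y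
  have hlim := tendsto_zero_of_hasDerivAt_of_integrableOn_Ioi hprod (hh'.sub hyh) hh
  have hparts := integral_Ioi_of_hasDerivAt_of_tendsto
    (hexp.continuousWithinAt.smul hcont) hprod (hh'.sub hyh) hlim
  rw [integral_sub hh' hyh, integral_smul] at hparts
  simp only [Pi.smul_apply', mul_zero, exp_zero, one_smul, zero_sub] at hparts
  exact (sub_eq_iff_eq_add.1 hparts).trans (by rw [laplaceTransform]; abel)

end LaplaceTransform

section AuxiliaryFunctions

open Set Real

variable {y : ℝ}

/-- The auxiliary function `f(y) = ∫_0^∞ e^{-yt} / (1 + t²) dt` of the sine and cosine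
integrals. -/
noncomputable def trigAuxF : ℝ → ℝ := laplaceTransform fun t => (1 + t ^ 2)⁻¹

/-- The auxiliary function `g(y) = ∫_0^∞ t e^{-yt} / (1 + t²) dt` of the sine and cosine
integrals. -/
noncomputable def trigAuxG : ℝ → ℝ := laplaceTransform fun t => t * (1 + t ^ 2)⁻¹

lemma laplaceConvergent_inv_one_add_sq (hy : 0 ≤ y) :
    LaplaceConvergent (fun t => (1 + t ^ 2)⁻¹) y := by
  suffices LaplaceConvergent (fun t => (1 + t ^ 2)⁻¹) 0 from this.mono hy
  simpa [LaplaceConvergent] using integrable_inv_one_add_sq.integrableOn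

lemma laplaceConvergent_id_mul_inv_one_add_sq (hy : 0 < y) :
    LaplaceConvergent (fun t => t * (1 + t ^ 2)⁻¹) y :=
  (laplaceConvergent_inv_one_add_sq le_rfl).id_smul hy

lemma hasDerivAt_trigAuxF (hy : 0 < y) : HasDerivAt trigAuxF (-trigAuxG y) y :=
  hasDerivAt_laplaceTransform (laplaceConvergent_inv_one_add_sq le_rfl) hy

lemma hasDerivAt_trigAuxG (hy : 0 < y) : HasDerivAt trigAuxG (trigAuxF y - y⁻¹) y := by
  have hsub : laplaceTransform (fun t => t • (t * (1 + t ^ 2)⁻¹)) y = y⁻¹ - trigAuxF y := by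
    have hsplit : ∀ t : ℝ, t • (t * (1 + t ^ 2)⁻¹) = 1 - (1 + t ^ 2)⁻¹ := fun t => by
      have : 1 + t ^ 2 ≠ 0 := by positivity
      rw [smul_eq_mul]
      field_simp
      ring
    simp only [hsplit]
    rw [laplaceTransform_sub (laplaceConvergent_const 1 hy)
      (laplaceConvergent_inv_one_add_sq hy.le), laplaceTransform_const 1 hy, smul_eq_mul, mul_one,
      trigAuxF]
  refine (hasDerivAt_laplaceTransform
    (laplaceConvergent_id_mul_inv_one_add_sq (half_pos hy)) (half_lt_self hy)).congr_deriv ?_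
  rw [hsub, neg_sub]

lemma tendsto_trigAuxF_atTop : Tendsto trigAuxF atTop (𝓝 0) :=
  tendsto_laplaceTransform_atTop (laplaceConvergent_inv_one_add_sq le_rfl)

lemma tendsto_trigAuxG_atTop : Tendsto trigAuxG atTop (𝓝 0) :=
  tendsto_laplaceTransform_atTop (laplaceConvergent_id_mul_inv_one_add_sq one_pos)

lemma trigAuxF_zero : trigAuxF 0 = π / 2 := by
  simp [trigAuxF, laplaceTransform, integral_Ioi_inv_one_add_sq]

lemma continuousOn_trigAuxF : ContinuousOn trigAuxF (Ici 0) := by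
  intro y hy
  obtain rfl | hy := (mem_Ici.1 hy).eq_or_lt
  · exact continuousWithinAt_laplaceTransform (laplaceConvergent_inv_one_add_sq le_rfl)
  · exact (hasDerivAt_trigAuxF hy).continuousAt.continuousWithinAt

lemma tendsto_intervalIntegral_sin_add_div (θ : ℝ) (hy : 0 < y) :
    Tendsto (fun R => ∫ t in y..R, sin (t + θ) / t) atTop
      (𝓝 (cos (y + θ) * trigAuxF y + sin (y + θ) * trigAuxG y)) := by
  set F : ℝ → ℝ := fun t => cos (t + θ) * trigAuxF t + sin (t + θ) * trigAuxG t
  have hderiv : ∀ t, 0 < t → HasDerivAt F (-(sin (t + θ) / t)) t := fun t ht => by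
    refine ((((hasDerivAt_id t).add_const θ).cos.mul (hasDerivAt_trigAuxF ht)).add
      (((hasDerivAt_id t).add_const θ).sin.mul (hasDerivAt_trigAuxG ht))).congr_deriv ?_
    simp only [id]
    ring
  have hlim : Tendsto F atTop (𝓝 0) := by
    simpa using (bdd_le_mul_tendsto_zero' 1 (Eventually.of_forall fun t => abs_cos_le_one (t + θ))
      tendsto_trigAuxF_atTop).add (bdd_le_mul_tendsto_zero' 1
        (Eventually.of_forall fun t => abs_sin_le_one (t + θ)) tendsto_trigAuxG_atTop)
  have hlim' : Tendsto (fun R => F y - F R) atTop (𝓝 (F y)) := by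
    simpa using hlim.const_sub (F y)
  refine hlim'.congr' ?_
  filter_upwards [eventually_ge_atTop y] with R hR
  have hpos : ∀ t ∈ uIcc y R, 0 < t := fun t ht => hy.trans_le (uIcc_of_le hR ▸ ht).1
  have hint : IntervalIntegrable (fun t => sin (t + θ) / t) volume y R :=
    ((by fun_prop : Continuous fun t => sin (t + θ)).continuousOn.div continuousOn_id
      fun t ht => (hpos t ht).ne').intervalIntegrable
  have := intervalIntegral.integral_eq_sub_of_hasDerivAt
    (fun t ht => hderiv t (hpos t ht)) hint.neg
  rw [intervalIntegral.integral_neg] at this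
  linarith

lemma si_eq_trigAux (hy : 0 < y) :
    si y = -(cos y * trigAuxF y + sin y * trigAuxG y) := by
  rw [si, Tendsto.limUnder_eq]
  simpa using tendsto_intervalIntegral_sin_add_div 0 hy

lemma ci_eq_trigAux (hy : 0 < y) :
    ci y = sin y * trigAuxF y - cos y * trigAuxG y := by
  have hlim := tendsto_intervalIntegral_sin_add_div (π / 2) hy
  simp only [sin_add_pi_div_two, cos_add_pi_div_two] at hlim
  rw [ci, hlim.limUnder_eq]
  ring

lemma Sker_eq_neg_trigAuxF {a x : ℝ} (ha : 0 < a) (hx : 0 < x) :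
    Sker a x = -trigAuxF (a * x) := by
  rw [Sker, sign_of_pos hx, abs_of_pos hx, si_eq_trigAux (mul_pos ha hx),
    ci_eq_trigAux (mul_pos ha hx)]
  linear_combination -trigAuxF (a * x) * sin_sq_add_cos_sq (a * x)

end AuxiliaryFunctions

section LogExcess

open Set Real

variable {t y : ℝ}

/-- The excess `log √(1 + t²) - log t`, whose Laplace transform measures how far `trigAuxG` is from
its singular part `-(γ + log y)` at `0`. -/
noncomputable def logExcess (t : ℝ) : ℝ :=
  log (1 + t ^ 2) / 2 - log t

lemma logExcess_eq (ht : t ≠ 0) : logExcess t = log (1 + (t ^ 2)⁻¹) / 2 := by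
  have hsplit : 1 + (t ^ 2)⁻¹ = (1 + t ^ 2) / t ^ 2 := by field_simp; ring
  rw [hsplit, log_div (by positivity) (by positivity), log_pow, logExcess]
  push_cast
  ring

lemma logExcess_nonneg (ht : t ≠ 0) : 0 ≤ logExcess t := by
  rw [logExcess_eq ht]
  have : 0 ≤ log (1 + (t ^ 2)⁻¹) := log_nonneg (le_add_of_nonneg_right (by positivity))
  positivity

lemma mul_logExcess_le_inv (ht : 0 < t) : t * logExcess t ≤ t⁻¹ := by
  have hlog : log (1 + (t ^ 2)⁻¹) ≤ (t ^ 2)⁻¹ := by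
    linarith [log_le_sub_one_of_pos (show 0 < 1 + (t ^ 2)⁻¹ by positivity)]
  calc t * logExcess t ≤ t * (t ^ 2)⁻¹ := by
        rw [logExcess_eq ht.ne']
        gcongr
        linarith [inv_nonneg.2 (sq_nonneg t)]
    _ = t⁻¹ := by field_simp

lemma hasDerivAt_half_log_one_add_sq (t : ℝ) :
    HasDerivAt (fun t => log (1 + t ^ 2) / 2) (t * (1 + t ^ 2)⁻¹) t := by
  have hsq : HasDerivAt (fun t : ℝ => 1 + t ^ 2) (2 * t) t := by
    simpa using (hasDerivAt_pow 2 t).const_add 1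
  refine ((hsq.log (by positivity)).div_const 2).congr_deriv ?_
  ring

lemma hasDerivAt_mul_logExcess_add_arctan (ht : t ≠ 0) :
    HasDerivAt (fun t => t * logExcess t + arctan t) (logExcess t) t := by
  have hexcess : HasDerivAt logExcess (t * (1 + t ^ 2)⁻¹ - t⁻¹) t :=
    (hasDerivAt_half_log_one_add_sq t).sub (hasDerivAt_log ht)
  refine (((hasDerivAt_id t).mul hexcess).add (hasDerivAt_arctan t)).congr_deriv ?_
  have : 1 + t ^ 2 ≠ 0 := by positivity
  simp only [id]
  field_simp
  ring

lemma continuous_mul_logExcess_add_arctan :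
    Continuous fun t => t * logExcess t + arctan t := by
  have hlog : Continuous fun t : ℝ => t * (log (1 + t ^ 2) / 2) :=
    continuous_id.mul ((Continuous.log (by fun_prop) fun t => by positivity).div_const 2)
  simp only [logExcess, mul_sub]
  exact (hlog.sub continuous_mul_log).add continuous_arctan

lemma tendsto_mul_logExcess_add_arctan_atTop :
    Tendsto (fun t => t * logExcess t + arctan t) atTop (𝓝 (π / 2)) := by
  have hmul : Tendsto (fun t => t * logExcess t) atTop (𝓝 0) := by
    refine squeeze_zero' ?_ ?_ tendsto_inv_atTop_zero
    · filter_upwards [eventually_gt_atTop 0] with t ht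
      exact mul_nonneg ht.le (logExcess_nonneg ht.ne')
    · filter_upwards [eventually_gt_atTop 0] with t ht using mul_logExcess_le_inv ht
  simpa using hmul.add (tendsto_arctan_atTop.mono_right nhdsWithin_le_nhds)

lemma integrableOn_logExcess : IntegrableOn logExcess (Ioi 0) :=
  integrableOn_Ioi_deriv_of_nonneg continuous_mul_logExcess_add_arctan.continuousWithinAt
    (fun _ ht => hasDerivAt_mul_logExcess_add_arctan ht.ne')
    (fun _ ht => logExcess_nonneg ht.ne') tendsto_mul_logExcess_add_arctan_atTop

lemma integral_logExcess : ∫ t in Ioi 0, logExcess t = π / 2 := by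
  rw [integral_Ioi_of_hasDerivAt_of_nonneg
    continuous_mul_logExcess_add_arctan.continuousWithinAt
    (fun _ ht => hasDerivAt_mul_logExcess_add_arctan ht.ne')
    (fun _ ht => logExcess_nonneg ht.ne') tendsto_mul_logExcess_add_arctan_atTop]
  simp

lemma laplaceConvergent_logExcess (hy : 0 ≤ y) : LaplaceConvergent logExcess y := by
  suffices LaplaceConvergent logExcess 0 from this.mono hy
  simpa [LaplaceConvergent] using integrableOn_logExcess

lemma abs_laplaceTransform_logExcess_le (hy : 0 ≤ y) :
    |laplaceTransform logExcess y| ≤ π / 2 := by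
  refine (norm_laplaceTransform_le (laplaceConvergent_logExcess le_rfl) hy).trans_eq ?_
  rw [← integral_logExcess]
  refine setIntegral_congr_fun measurableSet_Ioi fun t ht => ?_
  simp [abs_of_nonneg (logExcess_nonneg (ne_of_gt ht))]

end LogExcess

section LogTransform

open Set Real

variable {y : ℝ}

lemma laplaceTransform_log_one : laplaceTransform log 1 = -eulerMascheroniConstant := by
  have hderiv : HasDerivAt Complex.GammaIntegral (-(eulerMascheroniConstant : ℂ)) 1 := by
    refine Complex.hasDerivAt_Gamma_one.congr_of_eventuallyEq ?_
    have hre : {z : ℂ | 0 < z.re} ∈ 𝓝 1 :=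
      (isOpen_lt continuous_const Complex.continuous_re).mem_nhds (by simp)
    filter_upwards [hre] with z hz using (Complex.Gamma_eq_integral hz).symm
  have hint := (Complex.hasDerivAt_GammaIntegral (s := 1) (by simp)).unique hderiv
  simp only [sub_self, Complex.cpow_zero, one_mul] at hint
  rw [← Complex.ofReal_inj, laplaceTransform, ← integral_complex_ofReal]
  push_cast
  rw [← hint]
  congr 1 with t
  simp [mul_comm]

lemma laplaceConvergent_log_one : LaplaceConvergent log 1 := by
  -- A non-integrable function would have integral `0`, but the integral is `-γ`.
  refine Integrable.of_integral_ne_zero (?_ : laplaceTransform log 1 ≠ 0)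
  rw [laplaceTransform_log_one]
  linarith [one_half_lt_eulerMascheroniConstant]

lemma laplaceConvergent_log_mul_left (hy : 0 < y) : LaplaceConvergent (fun t => log (y * t)) y :=
  LaplaceConvergent.comp_mul_left (by rw [div_self hy.ne']; exact laplaceConvergent_log_one) hy

lemma laplaceTransform_log_mul_left (hy : 0 < y) :
    laplaceTransform (fun t => log (y * t)) y = -eulerMascheroniConstant / y := by
  rw [laplaceTransform_comp_mul_left _ _ hy, div_self hy.ne', laplaceTransform_log_one,
    smul_eq_mul, inv_mul_eq_div]

lemma laplaceConvergent_log (hy : 0 < y) : LaplaceConvergent log y := by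
  refine ((laplaceConvergent_log_mul_left hy).add
    (laplaceConvergent_const (-log y) hy)).congr_fun (fun t ht => ?_) measurableSet_Ioi
  simp only [log_mul hy.ne' (ne_of_gt ht), add_neg_cancel_comm]

lemma laplaceTransform_log (hy : 0 < y) :
    laplaceTransform log y = -(eulerMascheroniConstant + log y) / y := by
  have hsplit : laplaceTransform log y = laplaceTransform (fun t => log (y * t) - log y) y := by
    refine setIntegral_congr_fun measurableSet_Ioi fun t ht => ?_
    simp only [log_mul hy.ne' (ne_of_gt ht), add_sub_cancel_left]
  rw [hsplit, laplaceTransform_sub (laplaceConvergent_log_mul_left hy)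
    (laplaceConvergent_const _ hy), laplaceTransform_log_mul_left hy, laplaceTransform_const _ hy,
    smul_eq_mul]
  ring

end LogTransform

section Expansion

open Set Real

variable {y : ℝ}

lemma laplaceConvergent_half_log_one_add_sq (hy : 0 < y) :
    LaplaceConvergent (fun t => log (1 + t ^ 2) / 2) y := by
  simpa [logExcess] using (laplaceConvergent_logExcess hy.le).add (laplaceConvergent_log hy)

lemma trigAuxG_eq_neg_add_mul_laplaceTransform_logExcess (hy : 0 < y) :
    trigAuxG y =
      -(eulerMascheroniConstant + log y) + y * laplaceTransform logExcess y := by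
  have hparts : trigAuxG y = y * laplaceTransform (fun t => log (1 + t ^ 2) / 2) y := by
    simpa [trigAuxG] using laplaceTransform_deriv
      (hasDerivAt_half_log_one_add_sq 0).continuousAt.continuousWithinAt
      (fun t _ => hasDerivAt_half_log_one_add_sq t) (laplaceConvergent_half_log_one_add_sq hy)
      (laplaceConvergent_id_mul_inv_one_add_sq hy)
  have hexcess : laplaceTransform logExcess y = laplaceTransform (fun t => log (1 + t ^ 2) / 2) y
      - laplaceTransform log y :=
    laplaceTransform_sub (laplaceConvergent_half_log_one_add_sq hy) (laplaceConvergent_log hy)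
  rw [hparts, hexcess, laplaceTransform_log hy]
  field_simp
  ring

lemma hasDerivAt_trigAuxF_add_mul_sub_mul_log (hy : 0 < y) :
    HasDerivAt (fun x => trigAuxF x + (1 - eulerMascheroniConstant) * x - x * log x)
      (-(y * laplaceTransform logExcess y)) y := by
  refine (((hasDerivAt_trigAuxF hy).add (hasDerivAt_const_mul _)).sub
    (hasDerivAt_mul_log hy.ne')).congr_deriv ?_
  rw [trigAuxG_eq_neg_add_mul_laplaceTransform_logExcess hy]
  ring

lemma abs_trigAuxF_add_mul_sub_mul_log_sub_pi_div_two_le (hy : 0 < y) :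
    |trigAuxF y + (1 - eulerMascheroniConstant) * y - y * log y - π / 2| ≤ π / 2 * y ^ 2 := by
  have hcont : ContinuousOn
      (fun x => trigAuxF x + (1 - eulerMascheroniConstant) * x - x * log x) (Icc 0 y) :=
    ((continuousOn_trigAuxF.mono Icc_subset_Ici_self).add
      (continuous_const_mul _).continuousOn).sub continuous_mul_log.continuousOn
  obtain ⟨ξ, hξ, hslope⟩ := exists_hasDerivAt_eq_slope _ _ hy hcont
    fun x hx => hasDerivAt_trigAuxF_add_mul_sub_mul_log hx.1
  simp only [trigAuxF_zero, mul_zero, zero_mul, add_zero, sub_zero] at hslope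
  rw [eq_div_iff hy.ne'] at hslope
  calc |trigAuxF y + (1 - eulerMascheroniConstant) * y - y * log y - π / 2|
      = ξ * |laplaceTransform logExcess ξ| * y := by
        rw [← hslope, abs_mul, abs_neg, abs_mul, abs_of_pos hξ.1, abs_of_pos hy]
    _ ≤ y * (π / 2) * y := by
        gcongr
        exacts [hξ.2.le, abs_laplaceTransform_logExcess_le hξ.1.le]
    _ = π / 2 * y ^ 2 := by ring

end Expansion

/-- as `x → 0⁺`,
`S_a(x) = -π/2 + a(1-γ)x - a x ln(a x) + O(x²)`. -/
theorem stmt9 (a : ℝ) (ha : 0 < a) :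
    (fun x : ℝ => Sker a x + Real.pi / 2 - a * (1 - Real.eulerMascheroniConstant) * x
        + a * x * Real.log (a * x))
      =O[nhdsWithin 0 (Set.Ioi 0)] (fun x : ℝ => x ^ 2) := by
  refine Asymptotics.IsBigO.of_bound (Real.pi / 2 * a ^ 2) ?_
  filter_upwards [self_mem_nhdsWithin] with x hx
  rw [Sker_eq_neg_trigAuxF ha hx, Real.norm_eq_abs, Real.norm_of_nonneg (sq_nonneg x), ← abs_neg]
  convert abs_trigAuxF_add_mul_sub_mul_log_sub_pi_div_two_le (mul_pos ha hx) using 1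
  · congr 1
    ring
  · ring
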